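/- For a uniformly random mapping of an n-element set, the probability that the number of cyclic vertices λ satisfies n^{1/5} < λ < 4√(n·ln n) is 1 − o(1/√n) as n → ∞. -/

import Mathlib

/-!
Write `λ` for the number of cyclic vertices of a uniformly random `f : Fin n → Fin n`. The proof
rests on the bound
`P(λ = N) ≤ n (n-1) ⋯ (n-N+1) / n ^ N * (N / n)` (`card_card_cyclicVertices_eq_le`).

To obtain it, fix a set `S` of size `N`. If `f` has cyclic set `S`, then `f` permutes `S` and every
orbit reaches `S`. For each of the `N!` permutations of `S`, the number of extensions to a map all
of whose orbits reach `S` is `N n ^ (n-N-1)` (`card_reaching`). This forest count is a version of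
the matrix-tree theorem. Let `killedLaplacian S f` be the matrix with rows `e i` for `i ∈ S` and
`e i - e (f i)` for `i ∉ S`. Its determinant is `1` if all orbits of `f` reach `S` and `0`
otherwise, so the count is the sum of these determinants over `f`. By multilinearity in the rows
that sum is a single determinant, that of a diagonal matrix times a rank-one perturbation of the
identity. Summing over the `n.choose N` sets `S` gives the bound.

The two tails follow. For `N ≤ n ^ (1/5)` the factor `N / n` gives `P(λ = N) ≤ n ^ (-4/5)`, and
there are at most `2 n ^ (1/5)` such `N`. For `N ≥ 4 √(n log n)` the product is at most
`exp (-N (N-1) / (2 n)) ≤ n ^ (-4)`, and there are at most `n + 1` such `N`. The total is at most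
`4 n ^ (-3/5)` (`sum_bad_le`), which is `o(1 / √n)`.
-/

open Filter

/-! ### Counting forests by a determinant -/

/-- The matrix `I - N`, where `N` is the transition matrix of `f` killed on `S`: the row of
`i ∈ S` is the basis vector `e i`, and the row of `i ∉ S` is `e i - e (f i)`. -/
def killedLaplacian {V : Type*} [DecidableEq V] (S : Finset V) (f : V → V) : Matrix V V ℝ :=
  Matrix.of fun i j => (if i = j then 1 else 0) - if i ∈ S then 0 else if f i = j then 1 else 0

/-- When every orbit reaches `S`, ordering the vertices by their distance to `S` makes the matrix
triangular with ones on the diagonal. -/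
lemma det_killedLaplacian_eq_one {V : Type*} [Fintype V] [DecidableEq V] (S : Finset V)
    (f : V → V) (h : ∀ v, ∃ k, f^[k] v ∈ S) : (killedLaplacian S f).det = 1 := by
  classical
  let d : V → ℕ := fun v => Nat.find (h v)
  have hd : ∀ i, i ∉ S → d (f i) < d i := by
    intro i hi
    have hspec : f^[d i] i ∈ S := Nat.find_spec (h i)
    rcases hk : d i with _ | k
    · rw [hk] at hspec
      exact absurd hspec hi
    · rw [hk, Function.iterate_succ_apply] at hspec
      exact Nat.lt_succ_of_le (Nat.find_min' (h (f i)) hspec)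
  have htri : (killedLaplacian S f).BlockTriangular (fun v => OrderDual.toDual (d v)) := by
    intro i j hij
    have hij' : d i < d j := hij
    have h1 : i ≠ j := by rintro rfl; exact lt_irrefl _ hij'
    by_cases hi : i ∈ S
    · simp [killedLaplacian, h1, hi]
    · have h2 : f i ≠ j := by rintro rfl; exact absurd (hd i hi) (by omega)
      simp [killedLaplacian, h1, h2]
  rw [htri.det]
  refine Finset.prod_eq_one fun a _ => ?_
  have : (killedLaplacian S f).toSquareBlock (fun v => OrderDual.toDual (d v)) a = 1 := by
    ext ⟨i, hi⟩ ⟨j, hj⟩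
    have hij : d i = d j := OrderDual.toDual.injective (hi.trans hj.symm)
    have h2 : i ∉ S → f i ≠ j := by
      rintro hiS rfl
      exact absurd (hd i hiS) (by omega)
    by_cases hiS : i ∈ S
    · simp [Matrix.toSquareBlock, Matrix.toSquareBlockProp, killedLaplacian, hiS,
        Matrix.one_apply]
    · simp [Matrix.toSquareBlock, Matrix.toSquareBlockProp, killedLaplacian, h2 hiS,
        Matrix.one_apply]
  rw [this, Matrix.det_one]

/-- When some orbit avoids `S`, the indicator of the vertices whose orbit avoids `S` lies in the
kernel. -/
lemma det_killedLaplacian_eq_zero {V : Type*} [Fintype V] [DecidableEq V] (S : Finset V)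
    (f : V → V) (h : ¬ ∀ v, ∃ k, f^[k] v ∈ S) : (killedLaplacian S f).det = 0 := by
  classical
  push Not at h
  obtain ⟨w, hw⟩ := h
  rw [← Matrix.exists_mulVec_eq_zero_iff]
  refine ⟨fun v => if ∀ k, f^[k] v ∉ S then 1 else 0, ?_, ?_⟩
  · intro h0
    have := congrFun h0 w
    simp [hw] at this
  · ext i
    by_cases hi : i ∈ S
    · have : ¬ ∀ k, f^[k] i ∉ S := fun h => h 0 hi
      simp only [Matrix.mulVec, dotProduct, killedLaplacian, Matrix.of_apply, hi, if_true,
        sub_zero, ite_mul, one_mul, zero_mul, Finset.sum_ite_eq, Finset.mem_univ, this, if_false,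
        Pi.zero_apply]
    · have : (∀ k, f^[k] (f i) ∉ S) ↔ ∀ k, f^[k] i ∉ S := by
        constructor
        · rintro h (_ | k)
          · exact hi
          · exact h k
        · exact fun h k => h (k + 1)
      simp only [Matrix.mulVec, dotProduct, killedLaplacian, Matrix.of_apply, hi, if_false,
        sub_mul, Finset.sum_sub_distrib, ite_mul, one_mul, zero_mul, Finset.sum_ite_eq,
        Finset.mem_univ, if_true, this, sub_self, Pi.zero_apply]

/-- The forest count: once the values of `f` on `S` are prescribed, there are `|S| n ^ (n-|S|-1)`
ways to define `f` elsewhere so that every orbit reaches `S`. The exponent is split as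
`n ^ (n-|S|) * (|S| / n)`, so that the truncated subtraction is harmless when `S` is everything. -/
lemma card_reaching {V : Type*} [Fintype V] [DecidableEq V] [Nonempty V] (S : Finset V)
    (σ : S → V) :
    (Nat.card {f : V → V // (∀ i : S, f i = σ i) ∧ ∀ v, ∃ k, f^[k] v ∈ S} : ℝ) =
      (Fintype.card V : ℝ) ^ (Fintype.card V - S.card) * (S.card / Fintype.card V) := by
  classical
  set n := Fintype.card V with hn
  have hn0 : (n : ℝ) ≠ 0 := by
    rw [hn]; exact_mod_cast Fintype.card_ne_zero
  let A : V → Finset V := fun i => if h : i ∈ S then {σ ⟨i, h⟩} else Finset.univ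
  have hA : ∀ f : V → V, f ∈ Fintype.piFinset A ↔ ∀ i : S, f i = σ i := by
    intro f
    rw [Fintype.mem_piFinset]
    constructor
    · rintro h ⟨i, hi⟩
      simpa [A, hi] using h i
    · intro h i
      by_cases hi : i ∈ S
      · simpa [A, hi] using h ⟨i, hi⟩
      · simp [A, hi]
  have hcount : (Nat.card {f : V → V // (∀ i : S, f i = σ i) ∧ ∀ v, ∃ k, f^[k] v ∈ S} : ℝ) =
      ∑ f ∈ Fintype.piFinset A, (killedLaplacian S f).det := by
    have : ∀ f : V → V, (killedLaplacian S f).det =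
        if ∀ v, ∃ k, f^[k] v ∈ S then 1 else 0 := by
      intro f
      split_ifs with h
      · exact det_killedLaplacian_eq_one S f h
      · exact det_killedLaplacian_eq_zero S f h
    simp only [this]
    rw [Finset.sum_boole, Nat.card_eq_fintype_card, Fintype.card_subtype]
    congr 2
    ext f
    simp [hA]
  let g : V → V → V → ℝ := fun i r j =>
    (if i = j then 1 else 0) - if i ∈ S then 0 else if r = j then 1 else 0
  -- The determinant is multilinear in the rows, so the sum over `f` can be moved into each row.
  have hsum : ∑ f ∈ Fintype.piFinset A, (killedLaplacian S f).det =
      Matrix.det (Matrix.of fun i => ∑ r ∈ A i, g i r) :=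
    ((Matrix.detRowAlternating (R := ℝ) (n := V)).toMultilinearMap.map_sum_finset g A).symm
  have hfac : (Matrix.of fun i => ∑ r ∈ A i, g i r) =
      Matrix.diagonal (fun i => if i ∈ S then (1 : ℝ) else n) *
        (1 + Matrix.replicateCol Unit (fun i => if i ∈ S then (0 : ℝ) else -(1 / n)) *
          Matrix.replicateRow Unit (fun _ => (1 : ℝ))) := by
    ext i j
    rw [Matrix.diagonal_mul]
    by_cases hi : i ∈ S
    · simp [A, g, hi, Matrix.one_apply, Matrix.mul_apply]
    · simp [A, g, hi, Matrix.one_apply, Matrix.mul_apply, ← hn, mul_add, hn0]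
      ring
  have hc : (Finset.univ.filter fun i => i ∉ S).card = n - S.card := by
    rw [Finset.filter_not, Finset.filter_mem_eq_inter, Finset.univ_inter,
      ← Finset.compl_eq_univ_sdiff, Finset.card_compl]
  have hle : S.card ≤ n := Finset.card_le_univ S
  rw [hcount, hsum, hfac, Matrix.det_mul, Matrix.det_diagonal,
    Matrix.det_one_add_replicateCol_mul_replicateRow]
  congr 1
  · rw [Finset.prod_ite]
    simp [hc]
  · simp only [dotProduct, one_mul]
    rw [Finset.sum_ite]
    simp only [Finset.sum_const, hc, nsmul_eq_mul]
    push_cast [hle]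
    field_simp
    ring

/-! ### The law of the number of cyclic vertices -/

/-- The cyclic vertices of `f`, that is, its periodic points, as a finset. -/
noncomputable def cyclicVertices {V : Type*} [Fintype V] (f : V → V) : Finset V :=
  (Set.toFinite (Function.periodicPts f)).toFinset

/-- On a finite type every orbit repeats a value, and a repeated value is periodic. -/
lemma exists_iterate_mem_cyclicVertices {V : Type*} [Fintype V] (f : V → V) (v : V) :
    ∃ k, f^[k] v ∈ cyclicVertices f := by
  obtain ⟨a, b, hab, h⟩ := Finite.exists_ne_map_eq_of_infinite (fun k : ℕ => f^[k] v)
  wlog hlt : a < b generalizing a b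
  · exact this b a hab.symm h.symm (by omega)
  refine ⟨a, ?_⟩
  rw [cyclicVertices, Set.Finite.mem_toFinset]
  refine Function.mk_mem_periodicPts (n := b - a) (by omega) ?_
  show f^[b - a] (f^[a] v) = f^[a] v
  rw [← Function.iterate_add_apply, Nat.sub_add_cancel hlt.le]
  exact h.symm

/-- A map with cyclic set `S` restricts to a permutation of `S`, and all its orbits reach `S`;
`card_reaching` counts such maps for each of the `|S|!` permutations. -/
lemma card_cyclicVertices_eq_le {V : Type*} [Fintype V] [DecidableEq V] [Nonempty V]
    (S : Finset V) :
    (Nat.card {f : V → V // cyclicVertices f = S} : ℝ) ≤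
      (S.card).factorial *
      ((Fintype.card V : ℝ) ^ (Fintype.card V - S.card) * (S.card / Fintype.card V)) := by
  classical
  let T : Equiv.Perm S → Finset (V → V) := fun σ =>
    Finset.univ.filter fun f => (∀ i : S, f i = (σ i : V)) ∧ ∀ v, ∃ k, f^[k] v ∈ S
  have hT : ∀ σ, ((T σ).card : ℝ) =
      (Fintype.card V : ℝ) ^ (Fintype.card V - S.card) * (S.card / Fintype.card V) := by
    intro σ
    rw [← card_reaching S (fun i => (σ i : V)), Nat.card_eq_fintype_card, Fintype.card_subtype]
  have hsub : (Finset.univ.filter fun f : V → V => cyclicVertices f = S) ⊆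
      Finset.univ.biUnion T := by
    intro f hf
    rw [Finset.mem_filter] at hf
    have hS : ∀ v, v ∈ Function.periodicPts f ↔ v ∈ S := by
      intro v
      rw [← hf.2, cyclicVertices, Set.Finite.mem_toFinset]
    have hset : Function.periodicPts f = (S : Set V) := by
      ext v; exact hS v
    have hbij := Function.bijOn_periodicPts f
    rw [hset] at hbij
    rw [Finset.mem_biUnion]
    refine ⟨hbij.equiv f, Finset.mem_univ _, ?_⟩
    rw [Finset.mem_filter]
    refine ⟨Finset.mem_univ _, fun i => rfl, fun v => ?_⟩
    rw [← hf.2]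
    exact exists_iterate_mem_cyclicVertices f v
  have hcard := (Finset.card_le_card hsub).trans Finset.card_biUnion_le
  have hcard' : ((Finset.univ.filter fun f : V → V => cyclicVertices f = S).card : ℝ) ≤
      ∑ σ, ((T σ).card : ℝ) := by exact_mod_cast hcard
  rw [Nat.card_eq_fintype_card, Fintype.card_subtype]
  refine hcard'.trans_eq ?_
  simp only [hT, Finset.sum_const, Finset.card_univ, Fintype.card_perm, Fintype.card_coe,
    nsmul_eq_mul]

/-- An upper bound for the law of the number of cyclic vertices (it is in fact an equality). -/
lemma card_card_cyclicVertices_eq_le {V : Type*} [Fintype V] [Nonempty V]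
    (N : ℕ) (hN : N ≤ Fintype.card V) :
    (Nat.card {f : V → V // (cyclicVertices f).card = N} : ℝ) /
        (Fintype.card V : ℝ) ^ Fintype.card V ≤
      (Fintype.card V).descFactorial N / (Fintype.card V : ℝ) ^ N * (N / Fintype.card V) := by
  classical
  set n := Fintype.card V with hn
  have hn0 : (0 : ℝ) < n := by
    rw [hn]; exact_mod_cast Fintype.card_pos
  have h1 : (Nat.card {f : V → V // (cyclicVertices f).card = N} : ℝ) ≤
      ∑ S ∈ Finset.univ.powersetCard N, (Nat.card {f : V → V // cyclicVertices f = S} : ℝ) := by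
    have hsub : (Finset.univ.filter fun f : V → V => (cyclicVertices f).card = N) ⊆
        (Finset.univ.powersetCard N).biUnion
          fun S => Finset.univ.filter fun f : V → V => cyclicVertices f = S := by
      intro f hf
      simpa [Finset.mem_powersetCard] using hf
    have := (Finset.card_le_card hsub).trans Finset.card_biUnion_le
    simp only [Nat.card_eq_fintype_card, Fintype.card_subtype]
    exact_mod_cast this
  have h2 : ∑ S ∈ Finset.univ.powersetCard N, (Nat.card {f : V → V // cyclicVertices f = S} : ℝ) ≤
      ∑ S ∈ (Finset.univ : Finset V).powersetCard N,
        (N.factorial * ((n : ℝ) ^ (n - N) * (N / n))) := by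
    refine Finset.sum_le_sum fun S hS => ?_
    rw [Finset.mem_powersetCard] at hS
    simpa [hS.2] using card_cyclicVertices_eq_le S
  rw [div_le_iff₀ (by positivity)]
  refine (h1.trans h2).trans_eq ?_
  rw [Finset.sum_const, Finset.card_powersetCard, Finset.card_univ, nsmul_eq_mul, ← hn,
    Nat.descFactorial_eq_factorial_mul_choose]
  have : (n : ℝ) ^ n = n ^ (n - N) * n ^ N := by rw [← pow_add, Nat.sub_add_cancel hN]
  rw [this]
  push_cast
  field_simp

/-! ### The two tails -/

/-- Each factor `1 - k / n` of `n (n-1) ⋯ (n-N+1) / n ^ N` is at most `exp (-k / n)`. -/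
lemma descFactorial_div_pow_le (n : ℕ) (hn : 0 < n) (N : ℕ) (hN : N ≤ n) :
    (n.descFactorial N : ℝ) / (n : ℝ) ^ N ≤ Real.exp (-((N : ℝ) * (N - 1) / (2 * n))) := by
  have hn0 : (0 : ℝ) < n := by exact_mod_cast hn
  induction N with
  | zero => simp
  | succ k ih =>
    have h1 : (n.descFactorial (k + 1) : ℝ) / (n : ℝ) ^ (k + 1) =
        (1 - k / n) * ((n.descFactorial k : ℝ) / (n : ℝ) ^ k) := by
      rw [Nat.descFactorial_succ]
      push_cast [show k ≤ n by omega]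
      field_simp
      ring
    have h2 : (1 - k / n : ℝ) ≤ Real.exp (-(k / n : ℝ)) := by
      linarith [Real.add_one_le_exp (-(k / n : ℝ))]
    rw [h1]
    calc _ ≤ Real.exp (-(k / n : ℝ)) * Real.exp (-((k : ℝ) * (k - 1) / (2 * n))) :=
          mul_le_mul h2 (ih (by omega)) (by positivity) (Real.exp_pos _).le
      _ = _ := by
          rw [← Real.exp_add]
          congr 1
          push_cast
          field_simp
          ring

/-- The probability that `P λ` fails, as a union bound over the values `N` of `λ` violating `P`. -/
lemma one_sub_card_div_le {n : ℕ} (hn : 0 < n) (P : ℕ → Prop) [DecidablePred P] :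
    |1 - (Nat.card {f : Fin n → Fin n // P (cyclicVertices f).card} : ℝ) / (n : ℝ) ^ n| ≤
      ∑ N ∈ (Finset.range (n + 1)).filter (fun N => ¬ P N),
        (n.descFactorial N : ℝ) / (n : ℝ) ^ N * (N / n) := by
  classical
  have : Nonempty (Fin n) := ⟨⟨0, hn⟩⟩
  have hn0 : (0 : ℝ) < n := by exact_mod_cast hn
  have htot : (Nat.card {f : Fin n → Fin n // P (cyclicVertices f).card} : ℝ) +
      ((Finset.univ.filter fun f : Fin n → Fin n => ¬ P (cyclicVertices f).card).card : ℝ) =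
        (n : ℝ) ^ n := by
    rw [Nat.card_eq_fintype_card, Fintype.card_subtype]
    have := Finset.card_filter_add_card_filter_not (s := (Finset.univ : Finset (Fin n → Fin n)))
      (fun f => P (cyclicVertices f).card)
    rw [Finset.card_univ, Fintype.card_fun, Fintype.card_fin] at this
    exact_mod_cast this
  have heq : 1 - (Nat.card {f : Fin n → Fin n // P (cyclicVertices f).card} : ℝ) / (n : ℝ) ^ n =
      ((Finset.univ.filter fun f : Fin n → Fin n => ¬ P (cyclicVertices f).card).card : ℝ) /
        (n : ℝ) ^ n := by
    rw [eq_div_iff (by positivity), sub_mul, div_mul_cancel₀ _ (by positivity)]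
    linarith
  rw [heq, abs_of_nonneg (by positivity)]
  have hsub : (Finset.univ.filter fun f : Fin n → Fin n => ¬ P (cyclicVertices f).card) ⊆
      ((Finset.range (n + 1)).filter (fun N => ¬ P N)).biUnion
        fun N => Finset.univ.filter fun f : Fin n → Fin n => (cyclicVertices f).card = N := by
    intro f hf
    have h1 : (cyclicVertices f).card ≤ n := by
      simpa using Finset.card_le_univ (cyclicVertices f)
    rw [Finset.mem_filter] at hf
    simp only [Finset.mem_biUnion, Finset.mem_filter, Finset.mem_range, Finset.mem_univ, true_and]
    exact ⟨_, ⟨by omega, hf.2⟩, rfl⟩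
  have hcard := (Finset.card_le_card hsub).trans Finset.card_biUnion_le
  calc _ ≤ (∑ N ∈ (Finset.range (n + 1)).filter (fun N => ¬ P N),
        ((Finset.univ.filter fun f : Fin n → Fin n => (cyclicVertices f).card = N).card : ℝ)) /
          (n : ℝ) ^ n := by
        gcongr
        exact_mod_cast hcard
    _ ≤ _ := by
        rw [Finset.sum_div]
        refine Finset.sum_le_sum fun N hN => ?_
        rw [Finset.mem_filter, Finset.mem_range] at hN
        have := card_card_cyclicVertices_eq_le (V := Fin n) N (by simpa using by omega)
        rw [Nat.card_eq_fintype_card, Fintype.card_subtype] at this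
        simpa using this

/-- For `N ≤ n ^ (1/5)` the factor `N / n` alone is small enough. -/
lemma lower_term_le {n N : ℕ} (hn : 0 < n) (h : (N : ℝ) ≤ (n : ℝ) ^ ((1 : ℝ) / 5)) :
    (n.descFactorial N : ℝ) / (n : ℝ) ^ N * (N / n) ≤ (n : ℝ) ^ (-(4 : ℝ) / 5) := by
  have hn0 : (0 : ℝ) < n := by exact_mod_cast hn
  have h1 : (n.descFactorial N : ℝ) / (n : ℝ) ^ N ≤ 1 := by
    rw [div_le_one (by positivity)]
    exact_mod_cast Nat.descFactorial_le_pow n N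
  calc _ ≤ 1 * ((n : ℝ) ^ ((1 : ℝ) / 5) / n) := by gcongr
    _ = (n : ℝ) ^ ((1 : ℝ) / 5) * (n : ℝ) ^ (-1 : ℝ) := by
        rw [Real.rpow_neg_one, one_mul, div_eq_mul_inv]
    _ = _ := by
        rw [← Real.rpow_add hn0]
        norm_num

/-- For `N ≥ 4 √(n log n)` the exponential factor is at most `exp (-N² / (4 n)) ≤ n ^ (-4)`. -/
lemma upper_term_le {n N : ℕ} (hn : 2 ≤ n) (hN : N ≤ n)
    (h : 4 * Real.sqrt (n * Real.log n) ≤ N) :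
    (n.descFactorial N : ℝ) / (n : ℝ) ^ N * (N / n) ≤ (n : ℝ) ^ (-4 : ℝ) := by
  have hn0 : (0 : ℝ) < n := by positivity
  have hn2 : (2 : ℝ) ≤ n := by exact_mod_cast hn
  have hlog : Real.log 2 ≤ Real.log n := Real.log_le_log (by norm_num) hn2
  have hlog2 := Real.log_two_gt_d9
  have hx : 1 ≤ (n : ℝ) * Real.log n := by nlinarith
  have hsq : 16 * (n * Real.log n) ≤ (N : ℝ) ^ 2 := by
    have h2 := Real.sq_sqrt (show 0 ≤ (n : ℝ) * Real.log n by linarith)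
    nlinarith [Real.sqrt_nonneg ((n : ℝ) * Real.log n)]
  have hN2 : (2 : ℝ) ≤ N := by
    have := Real.one_le_sqrt.2 hx
    linarith
  have h1 : (N : ℝ) / n ≤ 1 := by
    rw [div_le_one hn0]
    exact_mod_cast hN
  calc _ ≤ Real.exp (-((N : ℝ) * (N - 1) / (2 * n))) * 1 := by
        gcongr
        exact descFactorial_div_pow_le n (by omega) N hN
    _ ≤ Real.exp (Real.log n * (-4)) := by
        rw [mul_one, Real.exp_le_exp, mul_neg, neg_le_neg_iff, le_div_iff₀ (by positivity)]
        nlinarith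
    _ = _ := by rw [Real.rpow_def_of_pos hn0]

/-- The lower tail contributes at most `2 n ^ (1/5) * n ^ (-4/5)` and the upper tail at most
`2 n * n ^ (-4)`. -/
lemma sum_bad_le {n : ℕ} (hn : 2 ≤ n) (P : ℕ → Prop) [DecidablePred P]
    (hP : ∀ N : ℕ, ¬ P N →
      (N : ℝ) ≤ (n : ℝ) ^ ((1 : ℝ) / 5) ∨ 4 * Real.sqrt (n * Real.log n) ≤ N) :
    ∑ N ∈ (Finset.range (n + 1)).filter (fun N => ¬ P N),
        (n.descFactorial N : ℝ) / (n : ℝ) ^ N * (N / n) ≤ 4 * (n : ℝ) ^ (-(3 : ℝ) / 5) := by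
  classical
  have hn0 : (0 : ℝ) < n := by positivity
  have hn1 : (1 : ℝ) ≤ n := by exact_mod_cast (by omega : 1 ≤ n)
  set x : ℝ := (n : ℝ) ^ ((1 : ℝ) / 5) with hx
  have hx1 : 1 ≤ x := Real.one_le_rpow hn1 (by norm_num)
  calc _ ≤ ∑ N ∈ (Finset.range (n + 1)).filter (fun N => ¬ P N),
        (if (N : ℝ) ≤ x then (n : ℝ) ^ (-(4 : ℝ) / 5) else (n : ℝ) ^ (-4 : ℝ)) := by
        refine Finset.sum_le_sum fun N hN => ?_
        rw [Finset.mem_filter, Finset.mem_range] at hN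
        split_ifs with h
        · exact lower_term_le (by omega) h
        · exact upper_term_le hn (by omega) ((hP N hN.2).resolve_left h)
    _ ≤ (x + 1) * (n : ℝ) ^ (-(4 : ℝ) / 5) + (n + 1) * (n : ℝ) ^ (-4 : ℝ) := by
        rw [Finset.sum_ite, Finset.sum_const, Finset.sum_const, nsmul_eq_mul, nsmul_eq_mul]
        gcongr
        · have : (((Finset.range (n + 1)).filter (fun N => ¬ P N)).filter
              fun N : ℕ => (N : ℝ) ≤ x) ⊆ Finset.range (⌊x⌋₊ + 1) := by
            intro N hN
            rw [Finset.mem_filter] at hN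
            rw [Finset.mem_range]
            exact Nat.lt_succ_of_le (Nat.le_floor hN.2)
          have h2 := Finset.card_le_card this
          rw [Finset.card_range] at h2
          have h3 := Nat.floor_le (show 0 ≤ x by linarith)
          have h4 : ((((Finset.range (n + 1)).filter (fun N => ¬ P N)).filter
              fun N : ℕ => (N : ℝ) ≤ x).card : ℝ) ≤ ⌊x⌋₊ + 1 := by exact_mod_cast h2
          linarith
        · have h2 := (Finset.card_filter_le ((Finset.range (n + 1)).filter (fun N => ¬ P N))
            (fun N : ℕ => ¬ (N : ℝ) ≤ x)).trans (Finset.card_filter_le _ _)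
          rw [Finset.card_range] at h2
          exact_mod_cast h2
    _ ≤ (2 * x) * (n : ℝ) ^ (-(4 : ℝ) / 5) + (2 * n) * (n : ℝ) ^ (-4 : ℝ) := by
        gcongr <;> linarith
    _ = 2 * (n : ℝ) ^ (-(3 : ℝ) / 5) + 2 * (n : ℝ) ^ (-3 : ℝ) := by
        have h1 : x * (n : ℝ) ^ (-(4 : ℝ) / 5) = (n : ℝ) ^ (-(3 : ℝ) / 5) := by
          rw [hx, ← Real.rpow_add hn0]; norm_num
        have h2 : (n : ℝ) * (n : ℝ) ^ (-4 : ℝ) = (n : ℝ) ^ (-3 : ℝ) := by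
          nth_rewrite 1 [← Real.rpow_one (n : ℝ)]
          rw [← Real.rpow_add hn0]; norm_num
        rw [← h1, ← h2]; ring
    _ ≤ _ := by
        have : (n : ℝ) ^ (-3 : ℝ) ≤ (n : ℝ) ^ (-(3 : ℝ) / 5) :=
          Real.rpow_le_rpow_of_exponent_le hn1 (by norm_num)
        linarith

/-- For a uniformly random mapping of an `n`-element set, the probability that the
number `λ` of cyclic vertices satisfies `n^{1/5} < λ < 4√(n ln n)` is `1 − o(1/√n)`
as `n → ∞`. -/
theorem stmt_6 :
    (fun n : ℕ => 1 -
        (Nat.card {f : Fin n → Fin n //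
            (n : ℝ) ^ ((1 : ℝ) / 5) <
              (Nat.card {v : Fin n // ∃ k, 1 ≤ k ∧ f^[k] v = v} : ℝ) ∧
            (Nat.card {v : Fin n // ∃ k, 1 ≤ k ∧ f^[k] v = v} : ℝ) <
              4 * Real.sqrt (n * Real.log n)} : ℝ) / (n : ℝ) ^ n)
      =o[atTop] fun n : ℕ => 1 / Real.sqrt n := by
  classical
  have hlam : ∀ (n : ℕ) (f : Fin n → Fin n),
      Nat.card {v : Fin n // ∃ k, 1 ≤ k ∧ f^[k] v = v} = (cyclicVertices f).card := by
    intro n f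
    rw [Nat.card_eq_fintype_card, Fintype.card_subtype]
    congr 1
    ext v
    rw [Finset.mem_filter, cyclicVertices, Set.Finite.mem_toFinset, Function.mem_periodicPts]
    simp only [Finset.mem_univ, true_and]
    rfl
  simp only [hlam]
  have hO : (fun n : ℕ => 1 -
        (Nat.card {f : Fin n → Fin n //
            (n : ℝ) ^ ((1 : ℝ) / 5) < ((cyclicVertices f).card : ℝ) ∧
            ((cyclicVertices f).card : ℝ) < 4 * Real.sqrt (n * Real.log n)} : ℝ) / (n : ℝ) ^ n)
      =O[atTop] fun n : ℕ => (n : ℝ) ^ (-(3 : ℝ) / 5) := by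
    refine Asymptotics.IsBigO.of_bound 4 ?_
    filter_upwards [eventually_ge_atTop 2] with n hn
    rw [Real.norm_eq_abs, Real.norm_of_nonneg (by positivity)]
    refine (one_sub_card_div_le (by omega) (fun N : ℕ => (n : ℝ) ^ ((1 : ℝ) / 5) < (N : ℝ) ∧
      (N : ℝ) < 4 * Real.sqrt (n * Real.log n))).trans (sum_bad_le hn _ ?_)
    intro N hN
    rwa [not_and_or, not_lt, not_lt] at hN
  refine hO.trans_isLittleO ?_
  have h10 : Tendsto (fun n : ℕ => (n : ℝ) ^ (-((1 : ℝ) / 10))) atTop (nhds 0) :=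
    (tendsto_rpow_neg_atTop (by norm_num)).comp tendsto_natCast_atTop_atTop
  refine Asymptotics.isLittleO_of_tendsto' ?_ (h10.congr' ?_)
  · filter_upwards [eventually_gt_atTop 0] with n hn h
    have hn0 : (0 : ℝ) < n := by exact_mod_cast hn
    exact absurd h (by positivity)
  · filter_upwards [eventually_gt_atTop 0] with n hn
    have hn0 : (0 : ℝ) < n := by exact_mod_cast hn
    rw [div_div_eq_mul_div, div_one, Real.sqrt_eq_rpow, ← Real.rpow_add hn0]
    norm_num
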